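/- Let α > 0 and let g : ℝ → ℂ be such that for every (x, ξ) ∈ ℝ² the family (g(x − αk) e^{2πi α k ξ})_{k∈ℤ} is summable and the resulting Zak transform Z_α g : ℝ² → ℂ is continuous. Then Z_α g has a zero in the fundamental domain: there exists (x, ξ) ∈ [0, α) × [0, 1/α) with Z_α g(x, ξ) = 0. -/

import Mathlib

/-!
The Zak transform `Z` is quasi-periodic: `Z(x + α, ξ) = e^{2πiαξ} Z(x, ξ)` and
`Z(x, ξ + 1/α) = Z(x, ξ)`.  Hence if `Z` had no zero in the fundamental domain it would vanish
nowhere on the plane, which is simply connected, so `Z = exp ∘ φ` with `φ` continuous.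
The functions `φ(x + α, ξ) - φ(x, ξ) - 2πiαξ` and `φ(x, ξ + 1/α) - φ(x, ξ)` are continuous logarithms
of `1`, hence constant (`exp_lift_const`).  Going from `(0, 0)` to `(α, 1/α)` along the two sides of
the fundamental domain then gives two values of `φ(α, 1/α)` that differ by `2πi`, a contradiction.
-/

open MeasureTheory Complex

/-- The Zak transform `Z_α g (x, ξ) = ∑_{k ∈ ℤ} g(x - αk) e^{2πiαkξ}`. -/
noncomputable def zak (α : ℝ) (g : ℝ → ℂ) (x ξ : ℝ) : ℂ :=
  ∑' k : ℤ, g (x - α * k) *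
    Complex.exp (2 * (Real.pi : ℂ) * Complex.I * (α : ℂ) * (k : ℂ) * (ξ : ℂ))

/-- A continuous logarithm of the constant function `1` on the plane is constant. -/
lemma exp_lift_const (h : ℝ × ℝ → ℂ) (hc : Continuous h) (h1 : ∀ p, Complex.exp (h p) = 1)
    (p q : ℝ × ℝ) : h p = h q :=
  Complex.isCoveringMap_exp.const_of_comp hc (fun a b => Subtype.ext (by simp [h1])) p q

lemma zak_add_left (α : ℝ) (g : ℝ → ℂ) (x ξ : ℝ) :
    zak α g (x + α) ξ = Complex.exp (2 * (Real.pi : ℂ) * Complex.I * α * ξ) * zak α g x ξ := by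
  unfold zak
  rw [← (Equiv.addRight (1 : ℤ)).tsum_eq, ← tsum_mul_left]
  congr 1
  ext k
  simp only [Equiv.coe_addRight]
  have e1 : x + α - α * ((k + 1 : ℤ) : ℝ) = x - α * k := by push_cast; ring
  rw [e1, mul_left_comm, ← Complex.exp_add]
  congr 2
  push_cast
  ring

lemma zak_add_right (α : ℝ) (hα : 0 < α) (g : ℝ → ℂ) (x ξ : ℝ) :
    zak α g x (ξ + 1 / α) = zak α g x ξ := by
  unfold zak
  congr 1
  ext k
  have hα' : (α : ℂ) ≠ 0 := by exact_mod_cast hα.ne'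
  have e1 : 2 * (Real.pi : ℂ) * Complex.I * α * k * ((ξ + 1 / α : ℝ) : ℂ)
      = 2 * (Real.pi : ℂ) * Complex.I * α * k * ξ + k * (2 * Real.pi * Complex.I) := by
    push_cast
    field_simp
  rw [e1, Complex.exp_add, Complex.exp_int_mul_two_pi_mul_I, mul_one]

/-- Vanishing of the Zak transform is invariant under the lattice `αℤ × α⁻¹ℤ`, so absence of zeros
in the fundamental domain propagates to the whole plane. -/
lemma zak_ne_zero (α : ℝ) (hα : 0 < α) (g : ℝ → ℂ)
    (H : ∀ x ∈ Set.Ico (0 : ℝ) α, ∀ ξ ∈ Set.Ico (0 : ℝ) (1 / α), zak α g x ξ ≠ 0) (x ξ : ℝ) :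
    zak α g x ξ ≠ 0 := by
  have hβ : 0 < 1 / α := by positivity
  have px : Function.Periodic (fun x => ∀ ξ, zak α g x ξ = 0 ↔ False) α := fun x => by
    simp [zak_add_left]
  have pξ : ∀ x, Function.Periodic (fun ξ => zak α g x ξ) (1 / α) :=
    fun x ξ => zak_add_right α hα g x ξ
  obtain ⟨x', hx', hx⟩ := px.exists_mem_Ico₀ hα x
  have key : ∀ ξ, zak α g x' ξ = 0 ↔ False := fun ξ => by
    obtain ⟨ξ', hξ', hξ⟩ := (pξ x').exists_mem_Ico₀ hβ ξ
    simpa [hξ] using H x' hx' ξ' hξ'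
  have := (iff_of_eq hx).mpr key ξ
  simpa using this

theorem stmt15 (α : ℝ) (hα : 0 < α) (g : ℝ → ℂ)
    (hsum : ∀ x ξ : ℝ, Summable (fun k : ℤ => g (x - α * k) *
        Complex.exp (2 * (Real.pi : ℂ) * Complex.I * (α : ℂ) * (k : ℂ) * (ξ : ℂ))))
    (hcont : Continuous (fun p : ℝ × ℝ => zak α g p.1 p.2)) :
    ∃ x ∈ Set.Ico (0 : ℝ) α, ∃ ξ ∈ Set.Ico (0 : ℝ) (1 / α), zak α g x ξ = 0 := by
  by_contra! H
  have hne := zak_ne_zero α hα g H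
  obtain ⟨φ, ⟨-, hφ⟩, -⟩ := Complex.isCoveringMapOn_exp.existsUnique_continuousMap_lifts
    (⟨_, hcont⟩ : C(ℝ × ℝ, ℂ)) (a₀ := (0, 0)) (e₀ := Complex.log (zak α g 0 0))
    (Complex.exp_log (hne 0 0)) (fun a => hne a.1 a.2)
  have hφ' : ∀ x ξ : ℝ, Complex.exp (φ (x, ξ)) = zak α g x ξ := fun x ξ => congrFun hφ (x, ξ)
  have hc := φ.continuous
  have h1 := exp_lift_const
    (fun p => φ (p.1 + α, p.2) - φ (p.1, p.2) - 2 * (Real.pi : ℂ) * Complex.I * α * (p.2 : ℝ))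
    (by fun_prop)
    (fun p => by
      rw [Complex.exp_sub, Complex.exp_sub, hφ', hφ', zak_add_left,
        mul_div_cancel_right₀ _ (hne _ _), div_self (Complex.exp_ne_zero _)])
    (0, 1 / α) (0, 0)
  have h2 := exp_lift_const (fun p => φ (p.1, p.2 + 1 / α) - φ (p.1, p.2))
    (by fun_prop)
    (fun p => by
      rw [Complex.exp_sub, hφ', hφ', zak_add_right α hα, div_self (hne _ _)])
    (α, 0) (0, 0)
  have hα' : (α : ℂ) ≠ 0 := by exact_mod_cast hα.ne'
  have e1 : 2 * (Real.pi : ℂ) * Complex.I * α * ((1 / α : ℝ) : ℂ) = 2 * Real.pi * Complex.I := by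
    push_cast
    field_simp
  simp only [zero_add, e1, Complex.ofReal_zero, mul_zero, sub_zero] at h1 h2
  exact Complex.two_pi_I_ne_zero (by linear_combination h2 - h1)
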